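/- arXiv:1808.04744 — 2 statements merged into one kernel-verified Lean document; each statement's English description precedes it below -/
import Mathlib

section
/- The graph YY₆ is not a spanner, even for points in convex position: for every real t there exists a finite set S of points in the plane in convex position and in general position and points u, v ∈ S such that every path between u and v in YY₆(S) has length greater than t·|uv|. -/
open Real

noncomputable section

/-- Counterclockwise angle in `[0, 2π)` from the positive x-axis to the direction of `z`. -/
def argIn (z : ℂ) : ℝ := if 0 ≤ Complex.arg z then Complex.arg z else Complex.arg z + 2 * π

/-- The half-open cone `C_i(u)` with apex `u`: points `p ≠ u` whose direction from `u` has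
counterclockwise angle in `[(i-1)π/3, iπ/3)`. -/
def cone (i : ℕ) (u : ℂ) : Set ℂ :=
  {p | p ≠ u ∧ argIn (p - u) ∈ Set.Ico (((i : ℝ) - 1) * (π / 3)) ((i : ℝ) * (π / 3))}

/-- The index `i ∈ {1, …, 6}` of the cone of `u` containing `v`. -/
def coneIdx (u v : ℂ) : ℕ := (⌊argIn (v - u) / (π / 3)⌋).toNat + 1

/-- The angle of the bisector ray of the cone of `u` containing `v`. -/
def bisAngle (u v : ℂ) : ℝ := ((coneIdx u v : ℝ) - 1) * (π / 3) + π / 6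

/-- The projective distance from `u` to `v`: the Euclidean distance from `u` to the
orthogonal projection of `v` onto the bisector ray of the cone of `u` containing `v`. -/
def projDist (u v : ℂ) : ℝ :=
  ((v - u) * Complex.exp (-(Complex.I * (bisAngle u v : ℂ)))).re

/-- `S` is in general position: no two points of `S` lie on a common line parallel to one of
the six rays from the origin at angles `jπ/3`. -/
def GenPos (S : Finset ℂ) : Prop :=
  ∀ u ∈ S, ∀ v ∈ S, u ≠ v → ∀ j : ℕ, argIn (v - u) ≠ (j : ℝ) * (π / 3)

/-- `S` is in convex position: every point of `S` is an extreme point of the convex hull. -/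
def ConvexPos (S : Finset ℂ) : Prop :=
  ∀ p ∈ S, p ∈ Set.extremePoints ℝ (convexHull ℝ (S : Set ℂ))

/-- `u → v` is a directed edge of `Θ₆(S)`: `v` minimizes the projective distance from `u`
among the points of `S` in the cone of `u` containing `v`. -/
def ThetaEdge (S : Finset ℂ) (u v : ℂ) : Prop :=
  u ∈ S ∧ v ∈ S ∧ v ≠ u ∧
    ∀ w ∈ S, w ∈ cone (coneIdx u v) u → projDist u v ≤ projDist u w

/-- `u → v` is a directed edge of `ΘΘ₆(S)`: it is an edge of `Θ₆(S)` and among all incoming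
`Θ₆`-edges `w → v` with `w` in the same cone of `v` as `u`, it minimizes `‖wv‖`. -/
def ThetaThetaEdge (S : Finset ℂ) (u v : ℂ) : Prop :=
  ThetaEdge S u v ∧
    ∀ w, ThetaEdge S w v → coneIdx v w = coneIdx v u → projDist u v ≤ projDist w v

/-- Undirected adjacency in `ΘΘ₆(S)`: paths may use edges in either direction. -/
def TTAdj (S : Finset ℂ) (u v : ℂ) : Prop := ThetaThetaEdge S u v ∨ ThetaThetaEdge S v u

/-- `p` is a path between `u` and `v` with respect to the adjacency relation `A`. -/
def IsPath (A : ℂ → ℂ → Prop) (u v : ℂ) (p : List ℂ) : Prop :=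
  p.Chain' A ∧ p.head? = some u ∧ p.getLast? = some v

/-- The Euclidean length of the polygonal path through the points of `p`. -/
def pathLength (p : List ℂ) : ℝ := (List.zipWith dist p p.tail).sum


/-- `u → v` is a directed edge of the Yao graph `Y₆(S)`: `v` minimizes the Euclidean
distance from `u` among the points of `S` in the cone of `u` containing `v`. -/
def YaoEdge (S : Finset ℂ) (u v : ℂ) : Prop :=
  u ∈ S ∧ v ∈ S ∧ v ≠ u ∧
    ∀ w ∈ S, w ∈ cone (coneIdx u v) u → dist u v ≤ dist u w

/-- `u → v` is a directed edge of `YY₆(S)`: it is an edge of `Y₆(S)` and among all incoming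
`Y₆`-edges `w → v` with `w` in the same cone of `v` as `u`, it minimizes `|wv|`. -/
def YaoYaoEdge (S : Finset ℂ) (u v : ℂ) : Prop :=
  YaoEdge S u v ∧
    ∀ w, YaoEdge S w v → coneIdx v w = coneIdx v u → dist u v ≤ dist w v

/-- Undirected adjacency in `YY₆(S)`. -/
def YYAdj (S : Finset ℂ) (u v : ℂ) : Prop := YaoYaoEdge S u v ∨ YaoYaoEdge S v u

/-!
Place points on the two branches of the curve `s ↦ (-(s² + |s|), √3 s)`, alternating between the
branches: `s = -1, 2, -3, 4, …, ±N`. The curve bounds a strictly convex region, and the line through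
two of the points makes an angle strictly between `0` and `π/3` with the horizontal. So each point
sees all earlier points in a single cone. As soon as `|s| ≥ 4`, the point two steps earlier, which
lies on the same branch, is strictly closer than every earlier point of the other branch. It also
sends a Yao edge to the point `s`, and this edge eliminates all edges between the point `s` and
earlier points of the other branch. Hence in `YY₆` the branches are joined only among the first
three points: a path between the last two points, which are at distance `O(N)`, has to come back
to one of these, at distance `N² + O(N)`.
-/

/-! ### Directions and cones -/

lemma arg_lt_iff_norm_mul_cos_lt_re {z : ℂ} (hz : 0 < z.im) {θ : ℝ} (hθ : θ ∈ Set.Icc 0 π) :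
    Complex.arg z < θ ↔ ‖z‖ * cos θ < z.re := by
  have hnorm : 0 < ‖z‖ := norm_pos_iff.2 (by rintro rfl; simp at hz)
  rw [← Complex.norm_mul_cos_arg z, mul_lt_mul_iff_right₀ hnorm]
  exact (strictAntiOn_cos.lt_iff_gt hθ
    ⟨Complex.arg_nonneg_iff.2 hz.le, Complex.arg_le_pi z⟩).symm

lemma lt_arg_iff_re_lt_norm_mul_cos {z : ℂ} (hz : 0 < z.im) {θ : ℝ} (hθ : θ ∈ Set.Icc 0 π) :
    θ < Complex.arg z ↔ z.re < ‖z‖ * cos θ := by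
  have hnorm : 0 < ‖z‖ := norm_pos_iff.2 (by rintro rfl; simp at hz)
  rw [← Complex.norm_mul_cos_arg z, mul_lt_mul_iff_right₀ hnorm]
  exact (strictAntiOn_cos.lt_iff_gt
    ⟨Complex.arg_nonneg_iff.2 hz.le, Complex.arg_le_pi z⟩ hθ).symm

lemma argIn_nonneg (z : ℂ) : 0 ≤ argIn z := by
  unfold argIn
  split_ifs with h
  · exact h
  · linarith [Complex.neg_pi_lt_arg z, pi_pos]

lemma argIn_of_im_pos {z : ℂ} (hz : 0 < z.im) : argIn z = Complex.arg z :=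
  if_pos (Complex.arg_nonneg_iff.2 hz.le)

lemma argIn_neg_of_im_pos {z : ℂ} (hz : 0 < z.im) : argIn (-z) = argIn z + π := by
  have hneg : Complex.arg (-z) < 0 := Complex.arg_neg_iff.2 (by simpa using hz)
  rw [argIn_of_im_pos hz, argIn, if_neg hneg.not_ge, Complex.arg_neg_eq_arg_sub_pi_of_im_pos hz]
  ring

lemma coneIdx_eq_iff {i : ℕ} (hi : i ≠ 0) {u v : ℂ} : coneIdx u v = i ↔
    argIn (v - u) ∈ Set.Ico (((i : ℝ) - 1) * (π / 3)) ((i : ℝ) * (π / 3)) := by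
  obtain ⟨k, rfl⟩ := Nat.exists_eq_succ_of_ne_zero hi
  have hpi : 0 < π / 3 := by positivity
  rw [coneIdx, Int.floor_toNat, Nat.succ_eq_add_one, Nat.add_right_cancel_iff,
    Nat.floor_eq_iff (div_nonneg (argIn_nonneg _) hpi.le), le_div_iff₀ hpi, div_lt_iff₀ hpi]
  simp

lemma mem_cone_coneIdx_iff {u v w : ℂ} :
    w ∈ cone (coneIdx u v) u ↔ w ≠ u ∧ coneIdx u w = coneIdx u v :=
  and_congr_right' (coneIdx_eq_iff (Nat.succ_ne_zero _)).symm

/-- The directions pointing into the interior of the `i`-th cone. A set whose difference vectors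
all lie in open sectors is in general position. -/
def openSector (i : ℕ) : Set ℂ :=
  {z | argIn z ∈ Set.Ioo (((i : ℝ) - 1) * (π / 3)) ((i : ℝ) * (π / 3))}

lemma mem_openSector_one {z : ℂ} (him : 0 < z.im) (hre : ‖z‖ < 2 * z.re) : z ∈ openSector 1 := by
  have hpos : 0 < Complex.arg z := by
    rw [lt_arg_iff_re_lt_norm_mul_cos him ⟨le_rfl, pi_pos.le⟩, cos_zero, mul_one]
    exact (le_abs_self _).trans_lt (Complex.abs_re_lt_norm.2 him.ne')
  have hlt : Complex.arg z < π / 3 := by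
    rw [arg_lt_iff_norm_mul_cos_lt_re him ⟨by positivity, by linarith [pi_pos]⟩, cos_pi_div_three]
    linarith
  simpa [openSector, argIn_of_im_pos him] using And.intro hpos hlt

lemma mem_openSector_three {z : ℂ} (him : 0 < z.im) (hre : ‖z‖ < -2 * z.re) :
    z ∈ openSector 3 := by
  have hgt : π - π / 3 < Complex.arg z := by
    rw [lt_arg_iff_re_lt_norm_mul_cos him ⟨by linarith [pi_pos], by linarith [pi_pos]⟩,
      cos_pi_sub, cos_pi_div_three]
    linarith
  have hlt : Complex.arg z < π := Complex.arg_lt_pi_iff.2 (Or.inr him.ne')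
  rw [openSector, Set.mem_ofPred_eq, argIn_of_im_pos him]
  constructor <;> push_cast <;> linarith

lemma neg_mem_openSector_add_three {i : ℕ} {z : ℂ} (him : 0 < z.im) (hz : z ∈ openSector i) :
    -z ∈ openSector (i + 3) := by
  obtain ⟨hlower, hupper⟩ := hz
  rw [openSector, Set.mem_ofPred_eq, argIn_neg_of_im_pos him]
  constructor <;> push_cast <;> linarith

lemma coneIdx_eq_of_sub_mem_openSector {i : ℕ} (hi : i ≠ 0) {u v : ℂ}
    (h : v - u ∈ openSector i) : coneIdx u v = i :=
  (coneIdx_eq_iff hi).2 (Set.Ioo_subset_Ico_self h)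

lemma argIn_ne_of_mem_openSector {i : ℕ} {z : ℂ} (hz : z ∈ openSector i) (j : ℕ) :
    argIn z ≠ j * (π / 3) := by
  intro heq
  have hpi : 0 < π / 3 := by positivity
  obtain ⟨hlower, hupper⟩ := hz
  rw [heq, mul_lt_mul_iff_left₀ hpi] at hlower hupper
  have hij : i < j + 1 := by exact_mod_cast sub_lt_iff_lt_add.1 hlower
  have hji : j < i := by exact_mod_cast hupper
  omega

/-! ### Edges and paths -/

lemma YYAdj.symm {S : Finset ℂ} {u v : ℂ} (h : YYAdj S u v) : YYAdj S v u :=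
  Or.symm h

lemma YYAdj.left_mem {S : Finset ℂ} {u v : ℂ} (h : YYAdj S u v) : u ∈ S :=
  h.elim (fun h => h.1.1) fun h => h.1.2.1

lemma not_yyAdj_of_yaoEdge {S : Finset ℂ} {u v w : ℂ} (hwv : YaoEdge S w v)
    (hcone : coneIdx v w = coneIdx v u) (hdist : dist v w < dist v u) : ¬ YYAdj S v u := by
  rintro (hvu | huv)
  · exact hdist.not_ge (hvu.1.2.2.2 w hwv.1 (mem_cone_coneIdx_iff.2 ⟨hwv.2.2.1.symm, hcone⟩))
  · have hle := huv.2 w hwv hcone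
    rw [dist_comm u, dist_comm w] at hle
    exact hdist.not_ge hle

lemma pathLength_nonneg (p : List ℂ) : 0 ≤ pathLength p := by
  rw [pathLength, ← List.map_uncurry_zip_eq_zipWith]
  exact List.sum_nonneg (List.forall_mem_map.2 fun _ _ => dist_nonneg)

lemma pathLength_cons_cons (a b : ℂ) (p : List ℂ) :
    pathLength (a :: b :: p) = dist a b + pathLength (b :: p) := by
  simp [pathLength]

lemma dist_le_pathLength_cons {a z : ℂ} {p : List ℂ} (hz : z ∈ a :: p) :
    dist a z ≤ pathLength (a :: p) := by
  induction p generalizing a with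
  | nil =>
    obtain rfl : z = a := by simpa using hz
    simp [pathLength]
  | cons b p ih =>
    rw [pathLength_cons_cons]
    rcases List.mem_cons.1 hz with rfl | hz
    · rw [dist_self]
      exact add_nonneg dist_nonneg (pathLength_nonneg _)
    · linarith [dist_triangle a b z, ih hz]

namespace IsPath

variable {A : ℂ → ℂ → Prop} {u v : ℂ} {p : List ℂ}

lemma dist_le_pathLength (h : IsPath A u v p) {z : ℂ} (hz : z ∈ p) :
    dist u z ≤ pathLength p := by
  obtain ⟨q, rfl⟩ := List.head?_eq_some_iff.1 h.2.1
  exact dist_le_pathLength_cons hz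

lemma exists_adj_not_iff (h : IsPath A u v p) {P : ℂ → Prop} (huv : ¬ (P u ↔ P v)) :
    ∃ x ∈ p, ∃ y, A x y ∧ ¬ (P x ↔ P y) := by
  by_contra! hA
  have hchain : p.IsChain fun x y => P x ↔ P y :=
    List.IsChain.imp_of_mem_imp (fun x y hx _ hxy => hA x hx y hxy) h.1
  obtain ⟨q, rfl⟩ := List.head?_eq_some_iff.1 h.2.1
  exact huv (hchain.induction (fun z => P u ↔ P z) _ (fun _ _ hxy hx => hx.trans hxy)
    (fun _ => Iff.rfl) v (List.mem_of_getLast? h.2.2))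

end IsPath

/-! ### Exposed points -/

section Exposed

variable {𝕜 E : Type*} [Field 𝕜] [LinearOrder 𝕜] [IsStrictOrderedRing 𝕜] [AddCommGroup E]
  [Module 𝕜 E]

lemma convex_insert_setOf_lt (f : E →ₗ[𝕜] 𝕜) (p : E) :
    Convex 𝕜 (insert p {z | f z < f p}) := by
  rw [convex_iff_pairwise_pos]
  intro x hx y hy hxy a b ha hb hab
  right
  have hlt : a * f x + b * f y < a * f p + b * f p := by
    rcases hx with rfl | hx <;> rcases hy with rfl | hy
    · exact absurd rfl hxy
    · gcongr; exact hy
    · gcongr; exact hx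
    · gcongr
      exacts [hx, hy]
  simpa [← add_mul, hab] using hlt

lemma mem_extremePoints_convexHull_of_forall_lt (f : E →ₗ[𝕜] 𝕜) {S : Set E} {p : E} (hp : p ∈ S)
    (hf : ∀ z ∈ S, z ≠ p → f z < f p) : p ∈ (convexHull 𝕜 S).extremePoints 𝕜 := by
  have hconv := convex_insert_setOf_lt f p
  have hsub : convexHull 𝕜 S ⊆ insert p {z | f z < f p} :=
    convexHull_min (fun z hz => or_iff_not_imp_left.2 (hf z hz)) hconv
  have hextreme : p ∈ (insert p {z | f z < f p}).extremePoints 𝕜 := by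
    have hp_notMem : p ∉ {z | f z < f p} := lt_irrefl (f p)
    rw [hconv.mem_extremePoints_iff_convex_sdiff, Set.insert_sdiff_self_of_notMem hp_notMem]
    exact ⟨Set.mem_insert _ _, convex_halfSpace_lt f.isLinear _⟩
  exact inter_extremePoints_subset_extremePoints_of_subset hsub
    ⟨subset_convexHull 𝕜 S hp, hextreme⟩

end Exposed

/-! ### The bent parabola -/

/-- The curve `s ↦ (-(s² + |s|), √3 s)` carrying the point set: two parabolic arcs, opening to the
left, that meet in a corner at the origin. The parameter `s` is positive on the upper branch. -/
def bentParabola (s : ℝ) : ℂ := ⟨-(s ^ 2 + |s|), √3 * s⟩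

lemma bentParabola_re (s : ℝ) : (bentParabola s).re = -(s ^ 2 + |s|) := rfl

lemma bentParabola_im (s : ℝ) : (bentParabola s).im = √3 * s := rfl

lemma bentParabola_im_pos_iff {s : ℝ} : 0 < (bentParabola s).im ↔ 0 < s :=
  mul_pos_iff_of_pos_left (by positivity)

lemma convexPos_of_subset_range_bentParabola {S : Finset ℂ}
    (hS : (S : Set ℂ) ⊆ Set.range bentParabola) : ConvexPos S := by
  intro p hp
  obtain ⟨s, rfl⟩ := hS hp
  -- The level line of this functional through `bentParabola s` supports the curve there.
  refine mem_extremePoints_convexHull_of_forall_lt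
    (Complex.reLm + ((2 * s + SignType.sign s) / √3) • Complex.imLm) hp fun z hz hne => ?_
  obtain ⟨r, rfl⟩ := hS hz
  have hrs : r ≠ s := by rintro rfl; exact hne rfl
  have hsq : 0 < (r - s) ^ 2 := sq_pos_of_ne_zero (sub_ne_zero.2 hrs)
  have hsign : (SignType.sign s : ℝ) * r ≤ |r| := by
    rcases lt_trichotomy s 0 with hs | rfl | hs
    · simpa [sign_neg hs] using neg_le_abs r
    · simp
    · simpa [sign_pos hs] using le_abs_self r
  have hcancel (x : ℝ) : (2 * s + SignType.sign s) / √3 * (√3 * x) =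
      2 * s * x + SignType.sign s * x := by
    field_simp
  simp only [LinearMap.add_apply, LinearMap.smul_apply, Complex.reLm_coe, Complex.imLm_coe,
    smul_eq_mul, bentParabola_re, bentParabola_im, hcancel, sign_mul_self]
  linarith

lemma dist_bentParabola_sq (s t : ℝ) : dist (bentParabola s) (bentParabola t) ^ 2 =
    (t ^ 2 + |t| - (s ^ 2 + |s|)) ^ 2 + 3 * (s - t) ^ 2 := by
  have hthree : √3 ^ 2 = 3 := sq_sqrt (by norm_num)
  rw [Complex.dist_eq_re_im, sq_sqrt (by positivity)]
  simp only [bentParabola_re, bentParabola_im]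
  linear_combination (s - t) ^ 2 * hthree

lemma dist_bentParabola_neg_neg (s t : ℝ) :
    dist (bentParabola (-s)) (bentParabola (-t)) = dist (bentParabola s) (bentParabola t) := by
  rw [← sq_eq_sq₀ dist_nonneg dist_nonneg, dist_bentParabola_sq, dist_bentParabola_sq,
    abs_neg, abs_neg]
  ring

lemma bentParabola_sub_im_pos {s t : ℝ} (h : s < t) :
    0 < (bentParabola t - bentParabola s).im := by
  rw [Complex.sub_im, bentParabola_im, bentParabola_im, ← mul_sub]
  exact mul_pos (by positivity) (sub_pos.2 h)

lemma abs_sub_lt_bentParabola_sub_re {s t : ℝ} (h : |s| + 1 ≤ |t|) :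
    |s - t| < (bentParabola s - bentParabola t).re := by
  calc |s - t| ≤ |s| + |t| := abs_sub s t
    _ < 1 * (|t| + |s| + 1) := by linarith
    _ ≤ (|t| - |s|) * (|t| + |s| + 1) := by gcongr; linarith
    _ = (bentParabola s - bentParabola t).re := by
      rw [Complex.sub_re, bentParabola_re, bentParabola_re, ← sq_abs s, ← sq_abs t]
      ring

lemma norm_bentParabola_sub_lt {s t : ℝ} (h : |s| + 1 ≤ |t|) :
    ‖bentParabola s - bentParabola t‖ < 2 * (bentParabola s - bentParabola t).re := by
  have hlt := abs_sub_lt_bentParabola_sub_re h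
  have hpos := (abs_nonneg _).trans_lt hlt
  have hsq : (s - t) ^ 2 < (bentParabola s - bentParabola t).re ^ 2 := by
    rwa [sq_lt_sq, abs_of_pos hpos]
  refine lt_of_pow_lt_pow_left₀ 2 (by positivity) ?_
  rw [← dist_eq_norm, dist_bentParabola_sq]
  rw [Complex.sub_re, bentParabola_re, bentParabola_re] at hsq ⊢
  linarith

lemma bentParabola_sub_mem_openSector_three {s t : ℝ} (ht : 0 < t) (h : |s| + 1 ≤ |t|) :
    bentParabola t - bentParabola s ∈ openSector 3 := by
  have hst : s < t := by linarith [le_abs_self s, abs_of_pos ht]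
  refine mem_openSector_three (bentParabola_sub_im_pos hst) ?_
  rw [norm_sub_rev, neg_mul_comm, ← Complex.neg_re, neg_sub]
  exact norm_bentParabola_sub_lt h

lemma bentParabola_sub_mem_openSector_one {s t : ℝ} (ht : t < 0) (h : |s| + 1 ≤ |t|) :
    bentParabola s - bentParabola t ∈ openSector 1 := by
  have hts : t < s := by linarith [neg_abs_le s, abs_of_neg ht]
  exact mem_openSector_one (bentParabola_sub_im_pos hts) (norm_bentParabola_sub_lt h)

lemma bentParabola_sub_mem_openSector_six {s t : ℝ} (ht : 0 < t) (h : |s| + 1 ≤ |t|) :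
    bentParabola s - bentParabola t ∈ openSector 6 := by
  have hst : s < t := by linarith [le_abs_self s, abs_of_pos ht]
  rw [← neg_sub]
  exact neg_mem_openSector_add_three (bentParabola_sub_im_pos hst)
    (bentParabola_sub_mem_openSector_three ht h)

lemma bentParabola_sub_mem_openSector_four {s t : ℝ} (ht : t < 0) (h : |s| + 1 ≤ |t|) :
    bentParabola t - bentParabola s ∈ openSector 4 := by
  have hts : t < s := by linarith [neg_abs_le s, abs_of_neg ht]
  rw [← neg_sub]
  exact neg_mem_openSector_add_three (bentParabola_sub_im_pos hts)
    (bentParabola_sub_mem_openSector_one ht h)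

lemma dist_bentParabola_le_dist {a b c : ℝ} (ha : 0 ≤ a) (hab : a ≤ b) (hbc : b ≤ c) :
    dist (bentParabola a) (bentParabola b) ≤ dist (bentParabola a) (bentParabola c) := by
  have hb := ha.trans hab
  have hc := hb.trans hbc
  refine le_of_sq_le_sq ?_ dist_nonneg
  rw [dist_bentParabola_sq, dist_bentParabola_sq, abs_of_nonneg ha, abs_of_nonneg hb,
    abs_of_nonneg hc, sub_sq_comm a b, sub_sq_comm a c]
  have hre : (b ^ 2 + b - (a ^ 2 + a)) ^ 2 ≤ (c ^ 2 + c - (a ^ 2 + a)) ^ 2 :=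
    pow_le_pow_left₀ (sub_nonneg.2 (by gcongr)) (by gcongr) 2
  have him : (b - a) ^ 2 ≤ (c - a) ^ 2 := pow_le_pow_left₀ (sub_nonneg.2 hab) (by gcongr) 2
  linarith

lemma dist_bentParabola_sub_two_lt {a b : ℝ} (ha : 4 ≤ a) (hb : 1 ≤ b) (hba : b + 1 ≤ a) :
    dist (bentParabola a) (bentParabola (a - 2)) <
      dist (bentParabola a) (bentParabola (-b)) := by
  refine lt_of_pow_lt_pow_left₀ 2 dist_nonneg ?_
  rw [dist_bentParabola_sq, dist_bentParabola_sq, abs_neg, abs_of_nonneg (by linarith : 0 ≤ a),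
    abs_of_nonneg (by linarith : 0 ≤ b), abs_of_nonneg (by linarith : 0 ≤ a - 2)]
  have hfactor : 0 ≤ (a + b) * (a ^ 2 + 3 * a - b ^ 2 - b) - 3 * (3 * a + b - 1) := by
    have : 4 * a ≤ a ^ 2 + 3 * a - b ^ 2 - b := by nlinarith
    nlinarith
  -- The difference of the squared distances is `4 * a - 13` plus this product, which vanishes
  -- at `b = a - 1`.
  have hproduct := mul_nonneg (by linarith : 0 ≤ a - 1 - b) hfactor
  linarith

lemma dist_bentParabola_neg_sub_one_le {a : ℝ} (ha : 1 ≤ a) :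
    dist (bentParabola a) (bentParabola (-(a - 1))) ≤ 4 * a := by
  refine le_of_sq_le_sq ?_ (by linarith)
  rw [dist_bentParabola_sq, abs_neg, abs_of_nonneg (by linarith : 0 ≤ a),
    abs_of_nonneg (by linarith : 0 ≤ a - 1)]
  nlinarith

/-! ### The zigzag -/

/-- The points of parameter `0, -1, 2, -3, 4, …` on the bent parabola: those of even index lie on
the upper branch. -/
def zigzag (m : ℕ) : ℂ := bentParabola ((-1) ^ m * m)

/-- The point set of the counterexample; the corner of the bent parabola is left out, so that every
point lies on exactly one branch. -/
def zigzagSet (N : ℕ) : Finset ℂ := (Finset.Icc 1 N).image zigzag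

lemma mem_zigzagSet {N : ℕ} {z : ℂ} : z ∈ zigzagSet N ↔ ∃ m, (1 ≤ m ∧ m ≤ N) ∧ zigzag m = z := by
  simp [zigzagSet]

lemma zigzag_mem_zigzagSet {m N : ℕ} (hm : 1 ≤ m) (hmN : m ≤ N) : zigzag m ∈ zigzagSet N :=
  mem_zigzagSet.2 ⟨m, ⟨hm, hmN⟩, rfl⟩

lemma zigzag_of_even {m : ℕ} (hm : Even m) : zigzag m = bentParabola m := by
  rw [zigzag, hm.neg_one_pow, one_mul]

lemma zigzag_of_odd {m : ℕ} (hm : Odd m) : zigzag m = bentParabola (-m) := by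
  rw [zigzag, hm.neg_one_pow, neg_one_mul]

lemma abs_neg_one_pow_mul_natCast (m : ℕ) : |(-1 : ℝ) ^ m * m| = m := by
  rw [abs_mul, abs_neg_one_pow, one_mul, Nat.abs_cast]

lemma zigzag_re (m : ℕ) : (zigzag m).re = -((m : ℝ) * (m + 1)) := by
  rw [zigzag, bentParabola_re, ← sq_abs, abs_neg_one_pow_mul_natCast]
  ring

lemma zigzag_im_pos_iff {m : ℕ} (hm : 1 ≤ m) : 0 < (zigzag m).im ↔ Even m := by
  have hpos : (0 : ℝ) < m := by exact_mod_cast hm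
  rcases m.even_or_odd with heven | hodd
  · rw [zigzag_of_even heven, bentParabola_im_pos_iff]
    exact iff_of_true hpos heven
  · rw [zigzag_of_odd hodd, bentParabola_im_pos_iff]
    exact iff_of_false (by linarith) (Nat.not_even_iff_odd.2 hodd)

lemma zigzag_injective : Function.Injective zigzag := by
  refine Function.Injective.of_comp (f := fun z : ℂ => -z.re) (StrictMono.injective ?_)
  intro l m hlm
  simp only [Function.comp_apply, zigzag_re, neg_neg]
  gcongr

lemma zigzag_sub_mem_openSector_inward {l m : ℕ} (h : l < m) :
    zigzag l - zigzag m ∈ openSector (if Even m then 6 else 1) := by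
  have hpos : (0 : ℝ) < m := by exact_mod_cast h.pos
  have habs : |(-1 : ℝ) ^ l * l| + 1 ≤ |(-1 : ℝ) ^ m * m| := by
    rw [abs_neg_one_pow_mul_natCast, abs_neg_one_pow_mul_natCast]
    exact_mod_cast h
  split_ifs with hm
  · refine bentParabola_sub_mem_openSector_six ?_ habs
    rwa [hm.neg_one_pow, one_mul]
  · refine bentParabola_sub_mem_openSector_one ?_ habs
    rwa [(Nat.not_even_iff_odd.1 hm).neg_one_pow, neg_one_mul, neg_lt_zero]

lemma zigzag_sub_mem_openSector_outward {l m : ℕ} (h : l < m) :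
    zigzag m - zigzag l ∈ openSector (if Even m then 3 else 4) := by
  have hpos : (0 : ℝ) < m := by exact_mod_cast h.pos
  have habs : |(-1 : ℝ) ^ l * l| + 1 ≤ |(-1 : ℝ) ^ m * m| := by
    rw [abs_neg_one_pow_mul_natCast, abs_neg_one_pow_mul_natCast]
    exact_mod_cast h
  split_ifs with hm
  · refine bentParabola_sub_mem_openSector_three ?_ habs
    rwa [hm.neg_one_pow, one_mul]
  · refine bentParabola_sub_mem_openSector_four ?_ habs
    rwa [(Nat.not_even_iff_odd.1 hm).neg_one_pow, neg_one_mul, neg_lt_zero]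

lemma coneIdx_zigzag_inward {l m : ℕ} (h : l < m) :
    coneIdx (zigzag m) (zigzag l) = if Even m then 6 else 1 :=
  coneIdx_eq_of_sub_mem_openSector (by split_ifs <;> norm_num) (zigzag_sub_mem_openSector_inward h)

lemma coneIdx_zigzag_outward {l m : ℕ} (h : l < m) :
    coneIdx (zigzag l) (zigzag m) = if Even m then 3 else 4 :=
  coneIdx_eq_of_sub_mem_openSector (by split_ifs <;> norm_num) (zigzag_sub_mem_openSector_outward h)

lemma genPos_zigzagSet (N : ℕ) : GenPos (zigzagSet N) := by
  intro u hu v hv huv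
  obtain ⟨m, -, rfl⟩ := mem_zigzagSet.1 hu
  obtain ⟨l, -, rfl⟩ := mem_zigzagSet.1 hv
  rcases lt_trichotomy l m with hlm | rfl | hml
  · exact argIn_ne_of_mem_openSector (zigzag_sub_mem_openSector_inward hlm)
  · exact absurd rfl huv
  · exact argIn_ne_of_mem_openSector (zigzag_sub_mem_openSector_outward hml)

lemma convexPos_zigzagSet (N : ℕ) : ConvexPos (zigzagSet N) := by
  refine convexPos_of_subset_range_bentParabola fun z hz => ?_
  obtain ⟨m, -, rfl⟩ := mem_zigzagSet.1 hz
  exact Set.mem_range_self _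

lemma dist_zigzag_of_even_iff {l m : ℕ} (h : Even l ↔ Even m) :
    dist (zigzag l) (zigzag m) = dist (bentParabola l) (bentParabola m) := by
  rcases l.even_or_odd with hl | hl
  · rw [zigzag_of_even hl, zigzag_of_even (h.1 hl)]
  · have hm : Odd m := by rwa [← Nat.not_even_iff_odd, ← h, Nat.not_even_iff_odd]
    rw [zigzag_of_odd hl, zigzag_of_odd hm, dist_bentParabola_neg_neg]

lemma dist_zigzag_of_not_even_iff {l m : ℕ} (h : ¬ (Even l ↔ Even m)) :
    dist (zigzag l) (zigzag m) = dist (bentParabola l) (bentParabola (-m)) := by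
  rcases l.even_or_odd with hl | hl
  · have hm : Odd m := by rw [← Nat.not_even_iff_odd]; tauto
    rw [zigzag_of_even hl, zigzag_of_odd hm]
  · have hm : Even m := by rw [← Nat.not_even_iff_odd] at hl; tauto
    rw [zigzag_of_odd hl, zigzag_of_even hm, ← dist_bentParabola_neg_neg, neg_neg]

lemma yaoEdge_zigzag_add_two {k N : ℕ} (hk : 1 ≤ k) (hkN : k + 2 ≤ N) :
    YaoEdge (zigzagSet N) (zigzag k) (zigzag (k + 2)) := by
  have heven : Even k ↔ Even (k + 2) := by simp [Nat.even_add]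
  refine ⟨zigzag_mem_zigzagSet hk (by omega), zigzag_mem_zigzagSet (by omega) hkN,
    zigzag_injective.ne (by omega), fun w hw hcone => ?_⟩
  obtain ⟨j, -, rfl⟩ := mem_zigzagSet.1 hw
  obtain ⟨hne, hidx⟩ := mem_cone_coneIdx_iff.1 hcone
  rw [coneIdx_zigzag_outward (by omega : k < k + 2)] at hidx
  rcases lt_trichotomy j k with hjk | rfl | hkj
  · rw [coneIdx_zigzag_inward hjk] at hidx
    split_ifs at hidx <;> omega
  · exact absurd rfl hne
  · rw [coneIdx_zigzag_outward hkj] at hidx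
    have hj : Even k ↔ Even j := by rw [heven]; split_ifs at hidx <;> tauto
    have hne_succ : j ≠ k + 1 := by
      rintro rfl
      rw [Nat.even_add_one] at hj
      tauto
    rw [dist_zigzag_of_even_iff heven, dist_zigzag_of_even_iff hj]
    exact dist_bentParabola_le_dist k.cast_nonneg (by simp)
      (by exact_mod_cast (by omega : k + 2 ≤ j))

lemma dist_zigzag_add_two_lt {k l : ℕ} (hk : 2 ≤ k) (hl : 1 ≤ l) (hlk : l < k + 2)
    (hparity : ¬ (Even (k + 2) ↔ Even l)) :
    dist (zigzag (k + 2)) (zigzag k) < dist (zigzag (k + 2)) (zigzag l) := by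
  rw [dist_zigzag_of_even_iff (by simp [Nat.even_add]), dist_zigzag_of_not_even_iff hparity]
  convert dist_bentParabola_sub_two_lt (a := (k + 2 : ℕ)) (b := l) ?_ ?_ ?_ using 3
  · push_cast; ring
  · exact_mod_cast (by omega : 4 ≤ k + 2)
  · exact_mod_cast hl
  · exact_mod_cast hlk

lemma not_yyAdj_zigzag {l m N : ℕ} (hl : 1 ≤ l) (hlm : l < m) (hm : 4 ≤ m) (hmN : m ≤ N)
    (hparity : ¬ (Even m ↔ Even l)) : ¬ YYAdj (zigzagSet N) (zigzag m) (zigzag l) := by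
  obtain ⟨k, rfl⟩ := Nat.exists_eq_add_of_le' (by omega : 2 ≤ m)
  refine not_yyAdj_of_yaoEdge (yaoEdge_zigzag_add_two (by omega) hmN) ?_
    (dist_zigzag_add_two_lt (by omega) hl hlm hparity)
  rw [coneIdx_zigzag_inward hlm, coneIdx_zigzag_inward (by omega : k < k + 2)]

lemma le_three_of_yyAdj_zigzag {l m N : ℕ} (hl : 1 ≤ l) (hlN : l ≤ N) (hm : 1 ≤ m) (hmN : m ≤ N)
    (hparity : ¬ (Even m ↔ Even l)) (hadj : YYAdj (zigzagSet N) (zigzag m) (zigzag l)) :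
    m ≤ 3 := by
  by_contra! hm3
  rcases lt_trichotomy l m with hlm | rfl | hml
  · exact not_yyAdj_zigzag hl hlm hm3 hmN hparity hadj
  · exact hparity Iff.rfl
  · exact not_yyAdj_zigzag hm hml (by omega) hlN (by tauto) hadj.symm

lemma exists_mem_path_neg_twelve_le_re {N : ℕ} {u v : ℂ} {p : List ℂ}
    (hp : IsPath (YYAdj (zigzagSet N)) u v p)
    (huv : ¬ (0 < u.im ↔ 0 < v.im)) : ∃ z ∈ p, -12 ≤ z.re := by
  obtain ⟨x, hx, y, hadj, hxy⟩ := hp.exists_adj_not_iff (P := fun z => 0 < z.im) huv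
  refine ⟨x, hx, ?_⟩
  obtain ⟨m, ⟨hm, hmN⟩, rfl⟩ := mem_zigzagSet.1 hadj.left_mem
  obtain ⟨l, ⟨hl, hlN⟩, rfl⟩ := mem_zigzagSet.1 hadj.symm.left_mem
  rw [zigzag_im_pos_iff hm, zigzag_im_pos_iff hl] at hxy
  have hm3 : (m : ℝ) ≤ 3 := by
    exact_mod_cast le_three_of_yyAdj_zigzag hl hlN hm hmN hxy hadj
  rw [zigzag_re]
  nlinarith [m.cast_nonneg (α := ℝ)]

lemma le_pathLength_zigzag {n : ℕ} (hn : 1 ≤ n) {p : List ℂ}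
    (hp : IsPath (YYAdj (zigzagSet (n + 1))) (zigzag (n + 1)) (zigzag n) p) :
    ((n : ℝ) + 1) * (n + 2) - 12 ≤ pathLength p := by
  obtain ⟨z, hz, hre⟩ := exists_mem_path_neg_twelve_le_re hp (by
    rw [zigzag_im_pos_iff n.succ_pos, zigzag_im_pos_iff hn, Nat.even_add_one]
    tauto)
  calc ((n : ℝ) + 1) * (n + 2) - 12 ≤ (z - zigzag (n + 1)).re := by
        rw [Complex.sub_re, zigzag_re]
        push_cast
        linarith
    _ ≤ dist z (zigzag (n + 1)) := by rw [dist_eq_norm]; exact Complex.re_le_norm _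
    _ ≤ pathLength p := by rw [dist_comm]; exact hp.dist_le_pathLength hz

lemma dist_zigzag_succ_le (n : ℕ) : dist (zigzag (n + 1)) (zigzag n) ≤ 4 * (n + 1) := by
  rw [dist_zigzag_of_not_even_iff (by rw [Nat.even_add_one]; tauto)]
  simpa using dist_bentParabola_neg_sub_one_le (a := (n : ℝ) + 1) (by simp)

/-- `YY₆` is not a spanner, even for points in convex position: for every
real `t` there is a finite set `S` in convex and general position and `u, v ∈ S` such that
every path between `u` and `v` in `YY₆(S)` has length greater than `t·|uv|`. -/
theorem yaoYao6_not_spanner_convex :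
    ∀ t : ℝ, ∃ S : Finset ℂ, ConvexPos S ∧ GenPos S ∧
      ∃ u ∈ S, ∃ v ∈ S, u ≠ v ∧
        ∀ p : List ℂ, IsPath (YYAdj S) u v p → t * dist u v < pathLength p := by
  intro t
  obtain ⟨n, hn⟩ := exists_nat_ge (max (4 * t) 12)
  obtain ⟨htn, hn12⟩ := max_le_iff.1 hn
  have hn1 : 1 ≤ n := by exact_mod_cast (by norm_num : (1 : ℝ) ≤ 12).trans hn12
  refine ⟨zigzagSet (n + 1), convexPos_zigzagSet _, genPos_zigzagSet _,
    zigzag (n + 1), zigzag_mem_zigzagSet n.succ_pos le_rfl,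
    zigzag n, zigzag_mem_zigzagSet hn1 n.le_succ, zigzag_injective.ne n.succ_ne_self, ?_⟩
  intro p hp
  calc t * dist (zigzag (n + 1)) (zigzag n)
      ≤ n / 4 * dist (zigzag (n + 1)) (zigzag n) := by gcongr; linarith
    _ ≤ n / 4 * (4 * (n + 1)) := by gcongr; exact dist_zigzag_succ_le n
    _ < (n + 1) * (n + 2) - 12 := by linarith
    _ ≤ pathLength p := le_pathLength_zigzag hn1 hp

end
end

section
/- Let a and b be points in the plane with b ∈ C₁(a), and let α ∈ (0, π/3) be the angle between the segment ab and the clockwise (horizontal) bounding ray of C₁(a). Let i₁ be the intersection point of the counterclockwise bounding ray of C₁(a) (the ray from a in direction angle π/3) with the horizontal line through b, and let i₂, i₃, i₄ be the images of i₁ under counterclockwise rotation about a by the angles π/3, 2π/3, and 2π/3 + α, respectively. Then |bi₂| + |i₂i₃| + |i₃i₄| + |i₄a| < 4·|ab|. -/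
/-!
Let `d = |ab|`, let `α` be the angle of `b - a` and let `r = |ai₁| = d sin α / sin (π / 3)`. In
polar coordinates about `a` the points `b, i₂, i₃, i₄` are `(d, α)`, `(r, 2π / 3)`, `(r, π)`,
`(r, π + α)`. The segment `bi₂` is horizontal, of length `d cos α + r / 2`, and `i₂i₃`, `i₃i₄` are
chords of the circle of radius `r` about `a`, so the claim is
`d cos α + r (5 / 2 + 2 sin (α / 2)) < 4 d`.

There is equality at `α = π / 3`. The AM-GM bound `2 c / k ≤ (c / k) ^ 2 + 1` for `c = cos (α / 2)`
and `k = sin (π / 3)`, which is exact there, leaves a polynomial inequality in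
`s = sin (α / 2) ∈ [0, 1 / 2)` with the factor `1 - 2 s`.
-/

open Real

noncomputable section

/-- The point with polar coordinates `(r, θ)` about `a`, which puts all vertices of
the region in one form. The radius `r` may be negative. -/
def polarPoint (a : ℂ) (r θ : ℝ) : ℂ := a + r * Complex.exp (Complex.I * θ)

section PolarPoint

variable (a : ℂ) (r s θ φ : ℝ)

lemma polarPoint_re : (polarPoint a r θ).re = a.re + r * cos θ := by
  rw [polarPoint, mul_comm Complex.I, Complex.add_re, Complex.re_ofReal_mul,
    Complex.exp_ofReal_mul_I_re]

lemma polarPoint_im : (polarPoint a r θ).im = a.im + r * sin θ := by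
  rw [polarPoint, mul_comm Complex.I, Complex.add_im, Complex.im_ofReal_mul,
    Complex.exp_ofReal_mul_I_im]

lemma add_exp_mul_polarPoint_sub :
    a + Complex.exp (Complex.I * φ) * (polarPoint a r θ - a) = polarPoint a r (φ + θ) := by
  simp only [polarPoint, Complex.ofReal_add, mul_add, Complex.exp_add]
  ring

lemma dist_polarPoint_center : dist (polarPoint a r θ) a = |r| := by
  rw [polarPoint, dist_self_add_left, norm_mul, Complex.norm_exp_I_mul_ofReal, mul_one,
    Complex.norm_real, norm_eq_abs]

lemma dist_polarPoint_add_angle :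
    dist (polarPoint a r θ) (polarPoint a r (θ + φ)) = |r| * |2 * sin (φ / 2)| := by
  have chord : polarPoint a r (θ + φ) - polarPoint a r θ =
      r * Complex.exp (Complex.I * θ) * (Complex.exp (Complex.I * φ) - 1) := by
    simp only [polarPoint, Complex.ofReal_add, mul_add, Complex.exp_add]
    ring
  rw [dist_comm, Complex.dist_eq, chord, norm_mul, norm_mul, Complex.norm_exp_I_mul_ofReal,
    Complex.norm_exp_I_mul_ofReal_sub_one, Complex.norm_real, norm_eq_abs, norm_eq_abs, mul_one]

variable {r s θ φ} in
lemma dist_polarPoint_of_mul_sin_eq (h : r * sin θ = s * sin φ) :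
    dist (polarPoint a r θ) (polarPoint a s φ) = |r * cos θ - s * cos φ| := by
  have same_height : (polarPoint a r θ).im = (polarPoint a s φ).im := by
    rw [polarPoint_im, polarPoint_im, h]
  rw [Complex.dist_of_im_eq same_height, polarPoint_re, polarPoint_re, dist_add_left,
    Real.dist_eq]

end PolarPoint

lemma exp_I_mul_argIn (z : ℂ) :
    Complex.exp (Complex.I * argIn z) = Complex.exp (Complex.I * z.arg) := by
  unfold argIn
  split_ifs
  · rfl
  · push_cast
    rw [mul_comm, mul_comm Complex.I, add_mul, Complex.exp_periodic]

lemma polarPoint_dist_argIn (a b : ℂ) : polarPoint a (dist a b) (argIn (b - a)) = b := by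
  rw [polarPoint, exp_I_mul_argIn, dist_comm, Complex.dist_eq, mul_comm Complex.I,
    Complex.norm_mul_exp_arg_mul_I, add_sub_cancel]

lemma sin_pi_div_three_pos : 0 < sin (π / 3) :=
  sin_pos_of_pos_of_lt_pi (by positivity) (by linarith [pi_pos])

lemma dist_sum_polarPoint_eq (a : ℂ) {d r α : ℝ} (hd : 0 ≤ d) (hα : α ∈ Set.Icc 0 (π / 2))
    (height_eq : d * sin α = r * sin (π / 3)) :
    dist (polarPoint a d α) (polarPoint a r (2 * π / 3)) +
        dist (polarPoint a r (2 * π / 3)) (polarPoint a r π) +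
        dist (polarPoint a r π) (polarPoint a r (π + α)) + dist (polarPoint a r (π + α)) a =
      d * cos α + r * (5 / 2 + 2 * sin (α / 2)) := by
  obtain ⟨hα₀, hα⟩ := hα
  have hcos : 0 ≤ cos α := cos_nonneg_of_mem_Icc ⟨by linarith [pi_pos], hα⟩
  have hsin : 0 ≤ sin α := sin_nonneg_of_nonneg_of_le_pi hα₀ (by linarith [pi_pos])
  have hsin_half : 0 ≤ sin (α / 2) :=
    sin_nonneg_of_nonneg_of_le_pi (by linarith) (by linarith [pi_pos])
  have hr : 0 ≤ r :=
    nonneg_of_mul_nonneg_left (height_eq ▸ mul_nonneg hd hsin) sin_pi_div_three_pos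
  have horizontal : dist (polarPoint a d α) (polarPoint a r (2 * π / 3)) = d * cos α + r / 2 := by
    rw [show 2 * π / 3 = π - π / 3 by ring,
      dist_polarPoint_of_mul_sin_eq a (by rw [sin_pi_sub, height_eq]), cos_pi_sub,
      cos_pi_div_three, show d * cos α - r * -(1 / 2) = d * cos α + r / 2 by ring,
      abs_of_nonneg (by positivity)]
  have chord_sixty : dist (polarPoint a r (2 * π / 3)) (polarPoint a r π) = r := by
    have chord := dist_polarPoint_add_angle a r (2 * π / 3) (π / 3)
    rw [show 2 * π / 3 + π / 3 = π by ring, show π / 3 / 2 = π / 6 by ring, sin_pi_div_six,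
      abs_of_nonneg hr] at chord
    simpa using chord
  have chord_alpha : dist (polarPoint a r π) (polarPoint a r (π + α)) = r * (2 * sin (α / 2)) := by
    rw [dist_polarPoint_add_angle, abs_of_nonneg hr, abs_of_nonneg (by positivity)]
  rw [horizontal, chord_sixty, chord_alpha, dist_polarPoint_center, abs_of_nonneg hr]
  ring

lemma cos_div_sin_pi_div_three_le (x : ℝ) :
    cos x / sin (π / 3) ≤ 7 / 6 - 2 / 3 * sin x ^ 2 := by
  have ratio_sq : (cos x / sin (π / 3)) ^ 2 = 4 / 3 * (1 - sin x ^ 2) := by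
    rw [div_pow, sq_sin_pi_div_three, cos_sq']
    ring
  linarith [two_mul_le_add_sq (cos x / sin (π / 3)) 1]

lemma mul_five_add_four_mul_mul_lt {s : ℝ} (hs₀ : 0 ≤ s) (hs : s < 1 / 2) :
    s * (5 + 4 * s) * (7 / 6 - 2 / 3 * s ^ 2) < 3 + 2 * s ^ 2 := by
  have cofactor_pos : 0 < 9 + s / 2 - 7 * s ^ 2 - 4 * s ^ 3 := by
    have hs₂ : s ^ 2 ≤ (1 / 2) ^ 2 := by gcongr
    have hs₃ : s ^ 3 ≤ (1 / 2) ^ 3 := by gcongr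
    linarith
  have factored_pos : 0 < (1 - 2 * s) * (9 + s / 2 - 7 * s ^ 2 - 4 * s ^ 3) :=
    mul_pos (by linarith) cofactor_pos
  linarith

lemma cos_add_sin_div_sin_pi_div_three_mul_lt_four {α : ℝ} (hα₀ : 0 ≤ α) (hα : α < π / 3) :
    cos α + sin α / sin (π / 3) * (5 / 2 + 2 * sin (α / 2)) < 4 := by
  have hs₀ : 0 ≤ sin (α / 2) :=
    sin_nonneg_of_nonneg_of_le_pi (by linarith) (by linarith [pi_pos])
  have hs : sin (α / 2) < 1 / 2 := by
    rw [← sin_pi_div_six]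
    exact sin_lt_sin_of_lt_of_le_pi_div_two (by linarith) (by linarith) (by linarith)
  have cos_eq : cos α = 1 - 2 * sin (α / 2) ^ 2 := by
    rw [← cos_two_mul_eq_one_sub, mul_div_cancel₀ α two_ne_zero]
  have sin_eq : sin α = 2 * sin (α / 2) * cos (α / 2) := by
    rw [← sin_two_mul, mul_div_cancel₀ α two_ne_zero]
  calc cos α + sin α / sin (π / 3) * (5 / 2 + 2 * sin (α / 2))
      = 1 - 2 * sin (α / 2) ^ 2 +
          sin (α / 2) * (5 + 4 * sin (α / 2)) * (cos (α / 2) / sin (π / 3)) := by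
        rw [cos_eq, sin_eq]
        ring
    _ ≤ 1 - 2 * sin (α / 2) ^ 2 +
          sin (α / 2) * (5 + 4 * sin (α / 2)) * (7 / 6 - 2 / 3 * sin (α / 2) ^ 2) := by
        gcongr
        exact cos_div_sin_pi_div_three_le _
    _ < 4 := by linarith [mul_five_add_four_mul_mul_lt hs₀ hs]

lemma dist_sum_polarPoint_lt (a : ℂ) {d r α : ℝ} (hd : 0 < d) (hα₀ : 0 ≤ α) (hα : α < π / 3)
    (height_eq : d * sin α = r * sin (π / 3)) :
    dist (polarPoint a d α) (polarPoint a r (2 * π / 3)) +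
        dist (polarPoint a r (2 * π / 3)) (polarPoint a r π) +
        dist (polarPoint a r π) (polarPoint a r (π + α)) + dist (polarPoint a r (π + α)) a <
      4 * d := by
  have r_eq : r = d * sin α / sin (π / 3) :=
    eq_div_of_mul_eq sin_pi_div_three_pos.ne' height_eq.symm
  calc _ = d * cos α + r * (5 / 2 + 2 * sin (α / 2)) :=
        dist_sum_polarPoint_eq a hd.le ⟨hα₀, by linarith [pi_pos]⟩ height_eq
    _ = (cos α + sin α / sin (π / 3) * (5 / 2 + 2 * sin (α / 2))) * d := by
        rw [r_eq]
        ring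
    _ < 4 * d := by
        gcongr
        exact cos_add_sin_div_sin_pi_div_three_mul_lt_four hα₀ hα

/-- With `b ∈ C₁(a)`, `α ∈ (0, π/3)` the angle of `ab` above the
horizontal, `i₁` the intersection of the ray from `a` at angle `π/3` with the horizontal
line through `b`, and `i₂, i₃, i₄` the rotations of `i₁` about `a` by `π/3`, `2π/3` and
`2π/3 + α`, we have `|bi₂| + |i₂i₃| + |i₃i₄| + |i₄a| < 4·|ab|`. -/
theorem convex_region_perimeter_bound (a b : ℂ) (hb : b ∈ cone 1 a)
    (hα : 0 < argIn (b - a)) (hα' : argIn (b - a) < π / 3)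
    (i₁ i₂ i₃ i₄ : ℂ)
    (h1 : i₁ = a + (((b - a).im / Real.sin (π / 3) : ℝ) : ℂ) *
        Complex.exp (Complex.I * ((π / 3 : ℝ) : ℂ)))
    (h2 : i₂ = a + Complex.exp (Complex.I * ((π / 3 : ℝ) : ℂ)) * (i₁ - a))
    (h3 : i₃ = a + Complex.exp (Complex.I * ((2 * π / 3 : ℝ) : ℂ)) * (i₁ - a))
    (h4 : i₄ = a + Complex.exp (Complex.I * ((2 * π / 3 + argIn (b - a) : ℝ) : ℂ)) *
        (i₁ - a)) :
    dist b i₂ + dist i₂ i₃ + dist i₃ i₄ + dist i₄ a < 4 * dist a b := by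
  have b_polar := polarPoint_dist_argIn a b
  have height_eq : dist a b * sin (argIn (b - a)) =
      (b - a).im / sin (π / 3) * sin (π / 3) := by
    rw [div_mul_cancel₀ _ sin_pi_div_three_pos.ne', Complex.sub_im, eq_sub_iff_add_eq',
      ← polarPoint_im, b_polar]
  have i₁_polar : i₁ = polarPoint a ((b - a).im / sin (π / 3)) (π / 3) := h1
  rw [i₁_polar, add_exp_mul_polarPoint_sub] at h2 h3 h4
  rw [show π / 3 + π / 3 = 2 * π / 3 by ring] at h2
  rw [show 2 * π / 3 + π / 3 = π by ring] at h3
  rw [show 2 * π / 3 + argIn (b - a) + π / 3 = π + argIn (b - a) by ring] at h4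
  have bound := dist_sum_polarPoint_lt a (dist_pos.2 hb.1.symm) hα.le hα' height_eq
  rwa [b_polar, ← h2, ← h3, ← h4] at bound

end
end
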